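/- arXiv:2008.13393 — 2 statements merged into one kernel-verified Lean document; each statement's English description precedes it below -/
import Mathlib

section
/- Let X be a separable complex Banach space, T a bounded linear operator on X, and Λ ⊆ (0,+∞) a set with at least two elements. Assume there exist a dense subset X₀ ⊆ X and a mapping S : X₀ → X₀ such that T(S(x)) = x for all x ∈ X₀, and suppose a_T(X₀,S) = 1/r(T) and b_T(X₀,S) = +∞. Then ⋂_{λ∈Λ} FHC(λT) ≠ ∅ if and only if Λ is countable and relatively compact in (1/r(T), +∞). -/
open Filter Topology
open scoped ENNReal NNReal

/-- Lower density of a set of natural numbers. -/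
noncomputable def lowerDensity (E : Set ℕ) : ℝ :=
  Filter.liminf (fun n : ℕ =>
    (∑ k ∈ Finset.range (n + 1), Set.indicator E (fun _ => (1 : ℝ)) k) / ((n : ℝ) + 1))
    Filter.atTop

/-- The set of frequently hypercyclic vectors of an operator. -/
noncomputable def FHC {X : Type*} [NormedAddCommGroup X] [NormedSpace ℂ X]
    (T : X →L[ℂ] X) : Set X :=
  {x | ∀ U : Set X, IsOpen U → U.Nonempty → 0 < lowerDensity {n : ℕ | (T ^ n) x ∈ U}}

/-- `a_T(X₀,S) = sup_{x ∈ X₀} limsup_n ‖Sⁿx‖^{1/n}`, computed in `ℝ≥0∞`. -/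
noncomputable def aT {X : Type*} [NormedAddCommGroup X] (X₀ : Set X) (S : X₀ → X₀) : ℝ≥0∞ :=
  ⨆ x : X₀, Filter.limsup
    (fun n : ℕ => (‖((S^[n] x : X₀) : X)‖₊ : ℝ≥0∞) ^ (1 / (n : ℝ))) Filter.atTop

/-- `b_T(X₀,S) = inf_{x ∈ X₀} (limsup_n ‖Tⁿx‖^{1/n})⁻¹`, computed in `ℝ≥0∞`. -/
noncomputable def bT {X : Type*} [NormedAddCommGroup X] [NormedSpace ℂ X]
    (T : X →L[ℂ] X) (X₀ : Set X) : ℝ≥0∞ :=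
  ⨅ x : X₀, (Filter.limsup
    (fun n : ℕ => (‖(T ^ n) (x : X)‖₊ : ℝ≥0∞) ^ (1 / (n : ℝ))) Filter.atTop)⁻¹

/-!
Necessity. If `x` is frequently hypercyclic for `l • T`, then `‖T ^ n x‖` is comparable to
`l ^ (-n)` along a set of times of positive lower density. For distinct `l` these sets are almost
disjoint, so `Λ` is countable. Positive lower density of one such set places, next to infinitely
many times `n` of any other, a time `n + d` with `d ≤ D n`; since `‖T ^ (n + d) x‖` is at most about
`r(T) ^ d ‖T ^ n x‖`, this yields `l ≤ μ * max 1 (μ * r(T)) ^ D` for `l, μ ∈ Λ`. The exponent `D`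
depends on only one of the two parameters, whichever we choose: fixing `μ` bounds `Λ`, and fixing
`l` while `μ` tends to some `z ≤ 1 / r(T)` shows that no `l ∈ Λ` exceeds `z`. Every point
of `Λ` can then be taken for `z`, so `Λ` has at most one point.

Sufficiency. Enumerate pairs `(λ, y)` from `Λ` and a countable dense set so that each pair recurs
infinitely often, attach to the `p`-th pair a set of times of positive lower density, and sum
`λ ^ (-n) S ^ n y` over all these times. Applying `(λ T) ^ m` at a time `m` of the pair `(λ, y)`
returns `y` plus cross terms. A time `n` of another pair `(λ', y')` contributes a factor
`(λ / λ') ^ min m n`, which is harmless because times of different pairs differ by a large factor,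
so that it is beaten by the decay in `|m - n|`.
-/

section Density

/-- The lower density of `E` is witnessed to be at least `c`: `card (E ∩ [0, n)) ≥ c n` for all
large `n`. Counting over `[0, n)` instead of `[0, n]` changes no density. -/
def HasDensityAtLeast (E : Set ℕ) (c : ℝ) : Prop :=
  ∀ᶠ n : ℕ in atTop, c * n ≤ (E ∩ Set.Iio n).ncard

theorem ncard_inter_Iio_le {E : Set ℕ} {n a : ℕ} (h : ∀ k ∈ E, k < n → k < a) :
    (E ∩ Set.Iio n).ncard ≤ a :=
  calc (E ∩ Set.Iio n).ncard ≤ (Set.Iio a).ncard :=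
        Set.ncard_le_ncard (fun k hk => h k hk.1 hk.2) (Set.finite_Iio a)
    _ = a := by rw [← Finset.coe_Iio, Set.ncard_coe_finset, Nat.card_Iio]

theorem sum_range_indicator_one_eq_ncard (E : Set ℕ) (n : ℕ) :
    ∑ k ∈ Finset.range n, E.indicator (fun _ => (1 : ℝ)) k = (E ∩ Set.Iio n).ncard := by
  classical
  have hset : E ∩ Set.Iio n = ↑{k ∈ Finset.range n | k ∈ E} := by
    ext k
    simp only [Set.mem_inter_iff, Set.mem_Iio, Finset.coe_filter, Finset.mem_range,
      Set.mem_ofPred_eq, and_comm]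
  rw [hset, Set.ncard_coe_finset, Finset.natCast_card_filter]
  rfl

theorem lowerDensity_pos_iff {E : Set ℕ} :
    0 < lowerDensity E ↔ ∃ c > 0, HasDensityAtLeast E c := by
  have hratio (n : ℕ) : (∑ k ∈ Finset.range (n + 1), E.indicator (fun _ => (1 : ℝ)) k) / (n + 1) =
      ((E ∩ Set.Iio (n + 1)).ncard : ℝ) / (n + 1 : ℕ) := by
    rw [sum_range_indicator_one_eq_ncard, Nat.cast_succ]
  have hshift : lowerDensity E =
      liminf (fun n : ℕ => ((E ∩ Set.Iio n).ncard : ℝ) / n) atTop := by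
    rw [lowerDensity, funext hratio]
    exact liminf_nat_add (fun n : ℕ => ((E ∩ Set.Iio n).ncard : ℝ) / n) 1
  have hnonneg (n : ℕ) : 0 ≤ ((E ∩ Set.Iio n).ncard : ℝ) / n := by positivity
  have hle_one (n : ℕ) : ((E ∩ Set.Iio n).ncard : ℝ) / n ≤ 1 :=
    div_le_one_of_le₀ (Nat.cast_le.2 (ncard_inter_Iio_le fun _ _ hk => hk)) n.cast_nonneg
  rw [hshift]
  constructor
  · intro h
    obtain ⟨c, hc, hcE⟩ := exists_between h
    refine ⟨c, hc, ?_⟩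
    filter_upwards [eventually_lt_of_lt_liminf hcE (isBoundedUnder_of ⟨0, hnonneg⟩),
      eventually_gt_atTop 0] with n hn hn0
    exact ((lt_div_iff₀ (Nat.cast_pos.2 hn0)).1 hn).le
  · rintro ⟨c, hc, hcE⟩
    refine hc.trans_le (le_liminf_of_le (isBoundedUnder_of ⟨1, hle_one⟩).isCoboundedUnder_ge ?_)
    filter_upwards [hcE, eventually_gt_atTop 0] with n hn hn0
    exact (le_div_iff₀ (Nat.cast_pos.2 hn0)).2 hn

theorem lowerDensity_pos_mono {E F : Set ℕ} (h : E ⊆ F) (hE : 0 < lowerDensity E) :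
    0 < lowerDensity F := by
  obtain ⟨c, hc, hcE⟩ := lowerDensity_pos_iff.1 hE
  refine lowerDensity_pos_iff.2 ⟨c, hc, hcE.mono fun n hn => hn.trans ?_⟩
  exact_mod_cast Set.ncard_le_ncard (Set.inter_subset_inter_left _ h)
    ((Set.finite_Iio n).inter_of_right F)

theorem exists_eventually_exists_mem_Icc {E : Set ℕ} (hE : 0 < lowerDensity E) :
    ∃ D : ℕ, ∀ᶠ n in atTop, ∃ m ∈ E, m ∈ Set.Icc n (D * n) := by
  obtain ⟨c, hc, hcE⟩ := lowerDensity_pos_iff.1 hE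
  obtain ⟨D, hD⟩ := exists_nat_gt (1 / c)
  have hD0 : 0 < D := Nat.cast_pos.1 ((one_div_pos.2 hc).trans hD)
  refine ⟨D, ?_⟩
  filter_upwards [(tendsto_id.const_mul_atTop' hD0).eventually hcE, eventually_gt_atTop 0]
    with n hn hn0
  by_contra! hgap
  have hcount : (E ∩ Set.Iio (D * n)).ncard ≤ n :=
    ncard_inter_Iio_le fun k hkE hk => not_le.1 fun hnk => hgap k hkE ⟨hnk, hk.le⟩
  have hlower : c * (D * n) ≤ n := by
    simpa using hn.trans (Nat.cast_le.2 hcount)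
  have hcD : 1 < D * c := (div_lt_iff₀ hc).1 hD
  have hn0' : (0 : ℝ) < n := Nat.cast_pos.2 hn0
  nlinarith

theorem infinite_of_lowerDensity_pos {E : Set ℕ} (hE : 0 < lowerDensity E) : E.Infinite := by
  obtain ⟨D, hD⟩ := exists_eventually_exists_mem_Icc hE
  refine Nat.frequently_atTop_iff_infinite.1 (frequently_atTop.2 fun N => ?_)
  obtain ⟨n, ⟨m, hm, hnm⟩, hNn⟩ := (hD.and (eventually_ge_atTop N)).exists
  exact ⟨m, hNn.trans hnm.1, hm⟩

theorem exists_frequently_mem_add_mem_of_right {F : Set ℕ} (hF : 0 < lowerDensity F) :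
    ∃ D : ℕ, ∀ G : Set ℕ, G.Infinite → ∃ᶠ n in atTop, n ∈ G ∧ ∃ d ≤ D * n, n + d ∈ F := by
  obtain ⟨D, hD⟩ := exists_eventually_exists_mem_Icc hF
  refine ⟨D, fun G hG => ?_⟩
  refine ((Nat.frequently_atTop_iff_infinite.2 hG).and_eventually hD).mono ?_
  rintro n ⟨hnG, m, hmF, hnm, hmD⟩
  exact ⟨hnG, m - n, (Nat.sub_le m n).trans hmD, by rwa [Nat.add_sub_cancel' hnm]⟩

theorem exists_frequently_mem_add_mem_of_left {G : Set ℕ} (hG : 0 < lowerDensity G) :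
    ∃ D : ℕ, ∀ F : Set ℕ, F.Infinite → ∃ᶠ n in atTop, n ∈ G ∧ ∃ d ≤ D * n, n + d ∈ F := by
  obtain ⟨D, hD⟩ := exists_eventually_exists_mem_Icc hG
  have hD0 : D ≠ 0 := by
    rintro rfl
    obtain ⟨n, ⟨m, -, hnm, hm⟩, hn⟩ := (hD.and (eventually_gt_atTop 0)).exists
    omega
  refine ⟨D + D, fun F hF => frequently_atTop.2 fun N => ?_⟩
  have hmultiples := (Nat.tendsto_div_const_atTop hD0).eventually
    (hD.and (eventually_ge_atTop (N + 1)))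
  obtain ⟨m, hmF, ⟨n, hnG, hmn, hnm⟩, hNm⟩ :=
    ((Nat.frequently_atTop_iff_infinite.2 hF).and_eventually hmultiples).exists
  have hn_le : n ≤ m := hnm.trans (Nat.mul_div_le m D)
  have hm_lt : m < D * (n + 1) :=
    (Nat.lt_mul_div_succ m (Nat.pos_of_ne_zero hD0)).trans_le (by gcongr)
  refine ⟨n, by omega, hnG, m - n, ?_, by rwa [Nat.add_sub_cancel' hn_le]⟩
  have hDn : D ≤ D * n := Nat.le_mul_of_pos_right D (by omega)
  rw [mul_add] at hm_lt
  rw [add_mul]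
  omega

theorem sum_ncard_inter_Iio_le {ι : Type*} {s : Finset ι} {E : ι → Set ℕ}
    (hE : (s : Set ι).PairwiseDisjoint E) (n : ℕ) : ∑ i ∈ s, (E i ∩ Set.Iio n).ncard ≤ n := by
  have hunion : (⋃ i ∈ (s : Set ι), E i ∩ Set.Iio n).ncard = ∑ i ∈ s, (E i ∩ Set.Iio n).ncard := by
    rw [s.finite_toSet.ncard_biUnion (fun i _ => (Set.finite_Iio n).inter_of_right (E i))
      (hE.mono fun i => Set.inter_subset_left), finsum_mem_coe_finset]
  rw [← hunion, ← Set.iUnion₂_inter]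
  exact ncard_inter_Iio_le fun _ _ hk => hk

theorem ncard_inter_Iio_le_sdiff_add (E : Set ℕ) (B n : ℕ) :
    (E ∩ Set.Iio n).ncard ≤ ((E \ Set.Iio B) ∩ Set.Iio n).ncard + B := by
  have h := Set.ncard_le_ncard_sdiff_add_ncard (E ∩ Set.Iio n) (Set.Iio B) (Set.finite_Iio B)
  rwa [Set.inter_sdiff_right_comm, ← Finset.coe_Iio B, Set.ncard_coe_finset (Finset.Iio B),
    Nat.card_Iio, Finset.coe_Iio] at h

theorem card_mul_le_one_of_hasDensityAtLeast {ι : Type*} {s : Finset ι} {E : ι → Set ℕ} {c : ℝ}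
    (hE : ∀ i ∈ s, HasDensityAtLeast (E i) c)
    (hfin : (s : Set ι).Pairwise fun i j => (E i ∩ E j).Finite) : s.card * c ≤ 1 := by
  obtain ⟨B, hB⟩ : ∃ B, ∀ n ≥ B, (s : Set ι).Pairwise fun i j => n ∉ E i ∩ E j := by
    simp only [Set.Pairwise, ← eventually_atTop, Finset.mem_coe, eventually_all_finset,
      eventually_imp_distrib_left]
    exact fun i hi j hj hij => Nat.cofinite_eq_atTop ▸ (hfin hi hj hij).eventually_cofinite_notMem
  have hdisj : (s : Set ι).PairwiseDisjoint fun i => E i \ Set.Iio B :=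
    fun i hi j hj hij => Set.disjoint_left.2 fun k hki hkj =>
      hB k (not_lt.1 hki.2) hi hj hij ⟨hki.1, hkj.1⟩
  have hbound : ∀ᶠ n : ℕ in atTop, (s.card * c - 1) * n ≤ s.card * B := by
    filter_upwards [(eventually_all_finset s).2 hE] with n hn
    have hupper : (∑ i ∈ s, (((E i \ Set.Iio B) ∩ Set.Iio n).ncard : ℝ)) ≤ n := by
      exact_mod_cast sum_ncard_inter_Iio_le hdisj n
    have hlower : s.card • (c * n) ≤
        ∑ i ∈ s, ((((E i \ Set.Iio B) ∩ Set.Iio n).ncard : ℝ) + B) :=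
      Finset.card_nsmul_le_sum _ _ _ fun i hi =>
        (hn i hi).trans (by exact_mod_cast ncard_inter_Iio_le_sdiff_add (E i) B n)
    rw [Finset.sum_add_distrib, Finset.sum_const, nsmul_eq_mul, nsmul_eq_mul] at hlower
    linarith
  by_contra! hlt
  obtain ⟨n, hn, hn'⟩ := (hbound.and ((tendsto_natCast_atTop_atTop.const_mul_atTop
    (sub_pos.2 hlt)).eventually_gt_atTop (s.card * B : ℝ))).exists
  exact hn.not_gt hn'

theorem countable_of_lowerDensity_pos {ι : Type*} {s : Set ι} {E : ι → Set ℕ}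
    (hE : ∀ i ∈ s, 0 < lowerDensity (E i)) (hfin : s.Pairwise fun i j => (E i ∩ E j).Finite) :
    s.Countable := by
  have hlevel (j : ℕ) : {i ∈ s | HasDensityAtLeast (E i) (1 / (j + 1))}.Finite := by
    by_contra hinf
    obtain ⟨t, hts, htcard⟩ := Set.Infinite.exists_subset_card_eq hinf (j + 2)
    have hcard := card_mul_le_one_of_hasDensityAtLeast (fun i hi => (hts hi).2)
      (hfin.mono fun i hi => (hts hi).1)
    rw [htcard, mul_one_div, div_le_one (by positivity)] at hcard
    push_cast at hcard
    linarith
  refine (Set.countable_iUnion fun j => (hlevel j).countable).mono fun i hi => ?_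
  obtain ⟨c, hc, hcE⟩ := lowerDensity_pos_iff.1 (hE i hi)
  obtain ⟨j, hj⟩ := exists_nat_one_div_lt hc
  exact Set.mem_iUnion.2 ⟨j, hi, hcE.mono fun n hn => le_trans (by gcongr) hn⟩

end Density

section Growth

theorem exists_forall_norm_le_mul_pow {E : Type*} [NormedAddCommGroup E] {f : ℕ → E} {R : ℝ}
    (h : limsup (fun n : ℕ => (‖f n‖₊ : ℝ≥0∞) ^ (1 / (n : ℝ))) atTop < ENNReal.ofReal R) :
    ∃ C ≥ 0, ∀ n, ‖f n‖ ≤ C * R ^ n := by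
  have hR : 0 < R := ENNReal.ofReal_pos.1 (bot_le.trans_lt h)
  have hbig : f =O[atTop] fun n => R ^ n := by
    refine Asymptotics.IsBigO.of_bound 1 ?_
    filter_upwards [eventually_lt_of_limsup_lt h, eventually_gt_atTop 0] with n hn hn0
    have hn0' : (0 : ℝ) < n := Nat.cast_pos.2 hn0
    have hpow : (‖f n‖₊ : ℝ≥0∞) ≤ ENNReal.ofReal R ^ (n : ℝ) := by
      rw [← ENNReal.rpow_inv_le_iff hn0', ← one_div]
      exact hn.le
    rw [one_mul, Real.norm_of_nonneg (by positivity)]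
    rwa [ENNReal.rpow_natCast, ← ENNReal.ofReal_pow hR.le, ← enorm_eq_nnnorm, ← ofReal_norm,
      ENNReal.ofReal_le_ofReal_iff (by positivity)] at hpow
  obtain ⟨C, hC, hbound⟩ := Asymptotics.bound_of_isBigO_nat_atTop hbig
  refine ⟨C, hC.le, fun n => ?_⟩
  simpa only [Real.norm_of_nonneg (pow_pos hR n).le] using hbound (pow_pos hR n).ne'

theorem exists_forall_norm_pow_le_mul_pow {A : Type*} [NormedRing A] [NormedAlgebra ℂ A]
    [CompleteSpace A] {a : A} {R : ℝ} (hR : spectralRadius ℂ a < ENNReal.ofReal R) :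
    ∃ C ≥ 0, ∀ n, ‖a ^ n‖ ≤ C * R ^ n := by
  refine exists_forall_norm_le_mul_pow ?_
  rwa [(spectrum.pow_nnnorm_pow_one_div_tendsto_nhds_spectralRadius a).limsup_eq]

end Growth

section ShellTimes

/-- The times at which the orbit norms `l ^ n * u n` of the multiple `l • T` lie in the shell
`(1, 2)`, where `u n` stands for `‖T ^ n x‖`. -/
def shellTimes (u : ℕ → ℝ) (l : ℝ) : Set ℕ :=
  {n | l ^ n * u n ∈ Set.Ioo 1 2}

variable {u : ℕ → ℝ} {l μ r : ℝ}

theorem finite_shellTimes_inter (hl : 0 < l) (hμ : 0 < μ) (hne : l ≠ μ) :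
    (shellTimes u l ∩ shellTimes u μ).Finite := by
  wlog hlt : μ < l generalizing l μ
  · exact Set.inter_comm _ _ ▸ this hμ hl hne.symm (hne.lt_of_le (not_lt.1 hlt))
  have hratio := (tendsto_pow_atTop_atTop_of_one_lt ((one_lt_div hμ).2 hlt)).eventually_ge_atTop 2
  refine Set.not_infinite.1 fun hinf => ?_
  obtain ⟨n, ⟨hnl, hnμ⟩, hn⟩ :=
    ((Nat.frequently_atTop_iff_infinite.2 hinf).and_eventually hratio).exists
  have hμn : 0 < μ ^ n := pow_pos hμ n
  have hun : 0 < u n := pos_of_mul_pos_right (one_pos.trans hnμ.1) hμn.le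
  rw [div_pow, le_div_iff₀ hμn] at hn
  have hlower : 2 * (μ ^ n * u n) ≤ l ^ n * u n := by
    rw [← mul_assoc]
    exact mul_le_mul_of_nonneg_right hn hun.le
  linarith [hnl.2, hnμ.1]

theorem div_pow_lt_of_mem_shellTimes {C R : ℝ} {n d : ℕ} (hu : u (n + d) ≤ C * R ^ d * u n)
    (hC : 0 ≤ C) (hR : 0 ≤ R) (hl : 0 < l) (hμ : 0 < μ) (hnl : n ∈ shellTimes u l)
    (hnμ : n + d ∈ shellTimes u μ) : (l / μ) ^ n < 2 * C * (μ * R) ^ d := by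
  rw [div_pow, div_lt_iff₀ (pow_pos hμ n)]
  calc l ^ n = l ^ n * 1 := (mul_one _).symm
    _ < l ^ n * (μ ^ (n + d) * u (n + d)) := by gcongr; exact hnμ.1
    _ ≤ l ^ n * (μ ^ (n + d) * (C * R ^ d * u n)) := by gcongr
    _ = C * (μ ^ n * (μ * R) ^ d) * (l ^ n * u n) := by rw [mul_pow]; ring
    _ ≤ C * (μ ^ n * (μ * R) ^ d) * 2 := by gcongr; exact hnl.2.le
    _ = 2 * C * (μ * R) ^ d * μ ^ n := by ring

theorem le_mul_pow_of_frequently_mem_shellTimes {C R : ℝ} {D : ℕ}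
    (hu : ∀ n d, u (n + d) ≤ C * R ^ d * u n) (hC : 0 ≤ C) (hR : 0 ≤ R) (hl : 0 < l) (hμ : 0 < μ)
    (hfreq : ∃ᶠ n in atTop, n ∈ shellTimes u l ∧ ∃ d ≤ D * n, n + d ∈ shellTimes u μ) :
    l ≤ μ * max 1 (μ * R) ^ D := by
  set Q : ℝ := max 1 (μ * R)
  have hQ : 1 ≤ Q := le_max_left _ _
  by_contra! hlt
  have hratio : 1 < l / μ / Q ^ D := by
    rw [div_div]
    exact (one_lt_div (by positivity)).2 hlt
  obtain ⟨n, ⟨hnl, d, hd, hnμ⟩, hn⟩ := (hfreq.and_eventually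
    ((tendsto_pow_atTop_atTop_of_one_lt hratio).eventually_ge_atTop (2 * C))).exists
  have hlower : 2 * C * Q ^ (D * n) ≤ (l / μ) ^ n := by
    rwa [div_pow _ (Q ^ D), ← pow_mul, le_div_iff₀ (by positivity)] at hn
  have hupper : (l / μ) ^ n < 2 * C * Q ^ (D * n) :=
    calc (l / μ) ^ n < 2 * C * (μ * R) ^ d :=
          div_pow_lt_of_mem_shellTimes (hu n d) hC hR hl hμ hnl hnμ
      _ ≤ 2 * C * Q ^ d := by gcongr; exact le_max_right _ _
      _ ≤ 2 * C * Q ^ (D * n) := by gcongr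
  exact hlower.not_gt hupper

/-- The sequence `u` grows at exponential rate at most `r`, uniformly in the starting time; for
`u n = ‖T ^ n x‖` this holds with `r` the spectral radius of `T`. -/
def HasGrowthRateLE (u : ℕ → ℝ) (r : ℝ) : Prop :=
  ∀ R > r, ∃ C ≥ 0, ∀ n d, u (n + d) ≤ C * R ^ d * u n

theorem HasGrowthRateLE.le_mul_pow (hu : HasGrowthRateLE u r) (hr : 0 ≤ r) (hl : 0 < l)
    (hμ : 0 < μ) {D : ℕ}
    (hfreq : ∃ᶠ n in atTop, n ∈ shellTimes u l ∧ ∃ d ≤ D * n, n + d ∈ shellTimes u μ) :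
    l ≤ μ * max 1 (μ * r) ^ D := by
  have hcont : Continuous fun R : ℝ => μ * max 1 (μ * R) ^ D := by fun_prop
  refine ge_of_tendsto (hcont.continuousWithinAt (s := Set.Ioi r)) ?_
  filter_upwards [self_mem_nhdsWithin] with R hR
  obtain ⟨C, hC, hCR⟩ := hu R hR
  exact le_mul_pow_of_frequently_mem_shellTimes hCR hC (hr.trans hR.le) hl hμ hfreq

variable {Λ : Set ℝ}

theorem countable_of_lowerDensity_shellTimes_pos (hpos : ∀ l ∈ Λ, 0 < l)
    (hΛ : ∀ l ∈ Λ, 0 < lowerDensity (shellTimes u l)) : Λ.Countable :=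
  countable_of_lowerDensity_pos hΛ fun l hl μ hμ => finite_shellTimes_inter (hpos l hl) (hpos μ hμ)

theorem bddAbove_of_lowerDensity_shellTimes_pos (hu : HasGrowthRateLE u r) (hr : 0 ≤ r)
    (hpos : ∀ l ∈ Λ, 0 < l) (hΛ : ∀ l ∈ Λ, 0 < lowerDensity (shellTimes u l)) : BddAbove Λ := by
  rcases Λ.eq_empty_or_nonempty with rfl | ⟨μ, hμ⟩
  · exact bddAbove_empty
  obtain ⟨D, hD⟩ := exists_frequently_mem_add_mem_of_right (hΛ μ hμ)
  exact ⟨μ * max 1 (μ * r) ^ D, fun l hl => hu.le_mul_pow hr (hpos l hl) (hpos μ hμ)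
    (hD _ (infinite_of_lowerDensity_pos (hΛ l hl)))⟩

theorem le_of_mem_closure_of_mul_le_one (hu : HasGrowthRateLE u r) (hr : 0 ≤ r)
    (hpos : ∀ l ∈ Λ, 0 < l) (hΛ : ∀ l ∈ Λ, 0 < lowerDensity (shellTimes u l)) {z : ℝ}
    (hz : z ∈ closure Λ) (hzr : z * r ≤ 1) (hl : l ∈ Λ) : l ≤ z := by
  obtain ⟨D, hD⟩ := exists_frequently_mem_add_mem_of_left (hΛ l hl)
  have hclosed : IsClosed {μ : ℝ | l ≤ μ * max 1 (μ * r) ^ D} :=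
    isClosed_le continuous_const (by fun_prop)
  have hmem : z ∈ {μ : ℝ | l ≤ μ * max 1 (μ * r) ^ D} :=
    closure_minimal (fun μ hμ => hu.le_mul_pow hr (hpos l hl) (hpos μ hμ)
      (hD _ (infinite_of_lowerDensity_pos (hΛ μ hμ)))) hclosed hz
  simpa only [Set.mem_ofPred_eq, max_eq_left hzr, one_pow, mul_one] using hmem

theorem one_lt_mul_of_mem_closure (hu : HasGrowthRateLE u r) (hr : 0 ≤ r)
    (hpos : ∀ l ∈ Λ, 0 < l) (hΛ : ∀ l ∈ Λ, 0 < lowerDensity (shellTimes u l))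
    (hnt : Λ.Nontrivial) {z : ℝ} (hz : z ∈ closure Λ) : 1 < z * r := by
  by_contra! hzr
  obtain ⟨b, hb, l, hl, hbl⟩ := hnt.exists_lt
  have hbz : b ≤ z := le_of_mem_closure_of_mul_le_one hu hr hpos hΛ hz hzr hb
  have hbr : b * r ≤ 1 := (mul_le_mul_of_nonneg_right hbz hr).trans hzr
  exact hbl.not_ge (le_of_mem_closure_of_mul_le_one hu hr hpos hΛ (subset_closure hb) hbr hl)

end ShellTimes

section Separated

theorem exists_padicValNat_two_eq (p N : ℕ) :
    ∃ k, N ≤ k ∧ k ≤ N + 2 ^ (p + 2) ∧ padicValNat 2 k = p := by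
  set j := N / 2 ^ (p + 1) + 1 with hj
  refine ⟨2 ^ p * (2 * j + 1), ?_, ?_, ?_⟩
  · have hlt := Nat.lt_mul_div_succ N (show 0 < 2 ^ (p + 1) by positivity)
    calc N ≤ 2 ^ (p + 1) * j := hlt.le
      _ ≤ 2 ^ p * (2 * j + 1) := by rw [pow_succ, mul_assoc]; gcongr; omega
  · have hle := Nat.mul_div_le N (2 ^ (p + 1))
    rw [hj, show 2 ^ p * (2 * (N / 2 ^ (p + 1) + 1) + 1) =
      2 ^ (p + 1) * (N / 2 ^ (p + 1)) + 2 ^ p * 3 by ring]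
    rw [pow_add 2 p 2]
    omega
  · rw [padicValNat.mul (by positivity) (by omega), padicValNat.prime_pow,
      padicValNat.eq_zero_of_not_dvd (by omega), add_zero]

theorem lowerDensity_pos_of_forall_exists_log_eq {K e g : ℕ} {E : Set ℕ} (hK : 2 ≤ K)
    (hE : ∀ N, ∃ a, N ≤ a ∧ a ≤ N + g ∧ ∀ n, Nat.log K n = a → K ^ e ∣ n → n ∈ E) :
    0 < lowerDensity E := by
  have hK1 : 1 < K := hK
  refine lowerDensity_pos_iff.2 ⟨((K : ℝ) ^ (g + e + 2))⁻¹, by positivity, ?_⟩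
  filter_upwards [eventually_ge_atTop (K ^ (g + e + 1))] with n hn
  have hn0 : n ≠ 0 := (lt_of_lt_of_le (by positivity) hn).ne'
  have hlog : g + e + 1 ≤ Nat.log K n := Nat.le_log_of_pow_le hK1 hn
  obtain ⟨a, ha, hag, haE⟩ := hE (Nat.log K n - 1 - g)
  have hea : e ≤ a := by omega
  have hal : a + 1 ≤ Nat.log K n := by omega
  have hblock : (fun i => K ^ e * i) '' Set.Ico (K ^ (a - e)) (K ^ (a - e + 1)) ⊆
      E ∩ Set.Iio n := by
    rintro _ ⟨i, ⟨hi, hi'⟩, rfl⟩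
    have hlow : K ^ a ≤ K ^ e * i := by
      rw [← Nat.add_sub_cancel' hea, pow_add]; gcongr
    have hhigh : K ^ e * i < K ^ (a + 1) := by
      rw [show a + 1 = e + (a - e + 1) by omega, pow_add]; gcongr
    exact ⟨haE _ (Nat.log_eq_of_pow_le_of_lt_pow hlow hhigh) (dvd_mul_right _ _),
      hhigh.trans_le ((Nat.pow_le_pow_right hK1.le hal).trans (Nat.pow_log_le_self K hn0))⟩
  have hcard : K ^ (a - e) ≤ (E ∩ Set.Iio n).ncard := by
    have hinj : Function.Injective fun i => K ^ e * i :=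
      mul_right_injective₀ (by positivity)
    calc K ^ (a - e) ≤ K ^ (a - e + 1) - K ^ (a - e) := by
          rw [pow_succ]
          have := Nat.mul_le_mul_left (K ^ (a - e)) hK
          omega
      _ = ((fun i => K ^ e * i) '' Set.Ico (K ^ (a - e)) (K ^ (a - e + 1))).ncard := by
          rw [Set.ncard_image_of_injective _ hinj, ← Finset.coe_Ico, Set.ncard_coe_finset,
            Nat.card_Ico]
      _ ≤ (E ∩ Set.Iio n).ncard :=
          Set.ncard_le_ncard hblock ((Set.finite_Iio n).inter_of_right E)
  have hsize : n ≤ K ^ (g + e + 2) * K ^ (a - e) := by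
    rw [← pow_add]
    exact (Nat.lt_pow_succ_log_self hK1 n).le.trans (Nat.pow_le_pow_right hK1.le (by omega))
  rw [inv_mul_le_iff₀ (by positivity)]
  exact_mod_cast hsize.trans (Nat.mul_le_mul_left _ hcard)

theorem mul_le_of_log_lt_of_even {K m n : ℕ} (hK : 1 < K) (hm : Even (Nat.log K m))
    (hn : Even (Nat.log K n)) (hmn : Nat.log K m < Nat.log K n) : K * m ≤ n := by
  have hgap : Nat.log K m + 2 ≤ Nat.log K n := by
    obtain ⟨i, hi⟩ := hm
    obtain ⟨j, hj⟩ := hn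
    omega
  have hn0 : n ≠ 0 := by rintro rfl; simp at hmn
  calc K * m ≤ K * K ^ (Nat.log K m + 1) := by
        gcongr; exact (Nat.lt_pow_succ_log_self hK m).le
    _ = K ^ (Nat.log K m + 2) := by ring
    _ ≤ K ^ Nat.log K n := Nat.pow_le_pow_right hK.le hgap
    _ ≤ n := Nat.pow_log_le_self K hn0

/-- The set `E` of times, labelled by `P`, in which times with the label `p` are at least `M p`
and at distance at least `M p` from each other, while two times that do not belong to such a
common group differ by a factor of at least `K`. -/
structure IsSeparated (K : ℕ) (M : ℕ → ℕ) (E : Set ℕ) (P : ℕ → ℕ) : Prop where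
  le_of_mem : ∀ n ∈ E, M (P n) ≤ n
  gap : ∀ m ∈ E, ∀ n ∈ E, m ≠ n →
    (P m = P n ∧ M (P m) ≤ Nat.dist m n) ∨ K * min m n ≤ max m n

theorem le_dist_of_dvd {k m n : ℕ} (hm : k ∣ m) (hn : k ∣ n) (hmn : m ≠ n) :
    k ≤ Nat.dist m n :=
  Nat.le_of_dvd (Nat.dist_pos_of_ne hmn)
    ((Nat.dvd_sub hm hn).add (Nat.dvd_sub hn hm))

/-- The blocks `K ^ (2 * k) ≤ n < K ^ (2 * k + 1)` carry the labels of the ruler sequence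
`padicValNat 2 k`, in which every label recurs with bounded gaps. -/
def rulerLabel (K n : ℕ) : ℕ :=
  padicValNat 2 (Nat.log K n / 2)

theorem exists_isSeparated {K : ℕ} (hK : 2 ≤ K) (M : ℕ → ℕ) :
    ∃ E P, IsSeparated K M E P ∧ ∀ p, 0 < lowerDensity {n | n ∈ E ∧ P n = p} := by
  set E : Set ℕ := {n | n ≠ 0 ∧ Even (Nat.log K n) ∧ K ^ M (rulerLabel K n) ∣ n}
  have hMK (p : ℕ) : M p ≤ K ^ M p := (Nat.lt_pow_self hK).le
  refine ⟨E, rulerLabel K, ⟨?_, ?_⟩, fun p => ?_⟩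
  · rintro n ⟨hn0, -, hdvd⟩
    exact (hMK _).trans (Nat.le_of_dvd (Nat.pos_of_ne_zero hn0) hdvd)
  · rintro m ⟨-, hm, hmdvd⟩ n ⟨-, hn, hndvd⟩ hmn
    rcases lt_trichotomy (Nat.log K m) (Nat.log K n) with hlt | heq | hlt
    · refine Or.inr (le_trans ?_ ((mul_le_of_log_lt_of_even hK hm hn hlt).trans (le_max_right _ _)))
      gcongr
      exact min_le_left _ _
    · have hlabel : rulerLabel K m = rulerLabel K n := by rw [rulerLabel, heq, ← rulerLabel]
      exact Or.inl ⟨hlabel, (hMK _).trans (le_dist_of_dvd hmdvd (hlabel ▸ hndvd) hmn)⟩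
    · refine Or.inr (le_trans ?_ ((mul_le_of_log_lt_of_even hK hn hm hlt).trans (le_max_left _ _)))
      gcongr
      exact min_le_right _ _
  · refine lowerDensity_pos_of_forall_exists_log_eq (e := M p) (g := 2 * 2 ^ (p + 2) + 2) hK
      fun N => ?_
    obtain ⟨k, hNk, hkN, hk⟩ := exists_padicValNat_two_eq p (N / 2 + 1)
    refine ⟨2 * k, by omega, by omega, fun n hlog hdvd => ?_⟩
    have hlabel : rulerLabel K n = p := by
      rw [rulerLabel, hlog, Nat.mul_div_cancel_left k two_pos, hk]
    have hn0 : n ≠ 0 := by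
      rintro rfl
      rw [Nat.log_zero_right] at hlog
      omega
    exact ⟨⟨hn0, hlog ▸ even_two_mul k, hlabel.symm ▸ hdvd⟩, hlabel⟩

end Separated

section Construction

theorem summable_pow_dist_and_tsum_le {w : ℝ} (hw0 : 0 ≤ w) (hw1 : w < 1) (m : ℕ) :
    Summable (fun n => w ^ Nat.dist m n) ∧ ∑' n, w ^ Nat.dist m n ≤ 2 / (1 - w) := by
  have hright (n : ℕ) : w ^ Nat.dist m (n + m) = w ^ n := by
    rw [Nat.dist_eq_sub_of_le (Nat.le_add_left m n), Nat.add_sub_cancel]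
  have hsummable : Summable fun n => w ^ Nat.dist m n :=
    (summable_nat_add_iff m).1 (by simpa only [hright] using summable_geometric_of_lt_one hw0 hw1)
  refine ⟨hsummable, ?_⟩
  have hleft : ∑ n ∈ Finset.range m, w ^ Nat.dist m n ≤ (1 - w)⁻¹ := by
    rw [← tsum_geometric_of_lt_one hw0 hw1, ← Finset.sum_range_reflect]
    refine le_trans (Finset.sum_le_sum fun n hn => ?_)
      ((summable_geometric_of_lt_one hw0 hw1).sum_le_tsum (Finset.range m)
        fun n _ => pow_nonneg hw0 n)
    have hnm : n < m := Finset.mem_range.1 hn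
    rw [Nat.dist_eq_sub_of_le_right (by omega)]
    exact pow_le_pow_of_le_one hw0 hw1.le (by omega)
  rw [← hsummable.sum_add_tsum_nat_add m, tsum_congr hright, tsum_geometric_of_lt_one hw0 hw1,
    div_eq_mul_inv, two_mul]
  gcongr

theorem pow_mul_pow_sub_le_pow {B w : ℝ} {L s t : ℕ} (hB : 0 ≤ B) (hw0 : 0 ≤ w) (hw1 : w ≤ 1)
    (hBL : B * w ^ L ≤ 1) (hst : (L + 4) * s ≤ t) : B ^ s * (w ^ 4) ^ (t - s) ≤ w ^ (3 * t) := by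
  rw [add_mul] at hst
  calc B ^ s * (w ^ 4) ^ (t - s) = B ^ s * w ^ (4 * (t - s)) := by rw [← pow_mul]
    _ ≤ B ^ s * w ^ (L * s + 3 * t) := by
        gcongr B ^ s * ?_
        exact pow_le_pow_of_le_one hw0 hw1 (by omega)
    _ = (B * w ^ L) ^ s * w ^ (3 * t) := by rw [mul_pow, pow_add, pow_mul, mul_assoc]
    _ ≤ w ^ (3 * t) := mul_le_of_le_one_left (by positivity) (pow_le_one₀ (by positivity) hBL)

theorem mul_pow_min_mul_pow_dist_le {B c w ρ : ℝ} {L m n : ℕ} (hw0 : 0 ≤ w) (hw1 : w ≤ 1)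
    (hρ : 0 ≤ ρ) (hρB : ρ ≤ B) (hBL : B * w ^ L ≤ 1) (hc : 0 ≤ c) (hcn : c * w ^ n ≤ 1)
    (hgap : (L + 4) * min m n ≤ max m n) :
    c * (ρ ^ min m n * (w ^ 4) ^ Nat.dist m n) ≤ w ^ m * w ^ n := by
  have hdist : Nat.dist m n = max m n - min m n := by
    rw [Nat.dist]
    omega
  calc c * (ρ ^ min m n * (w ^ 4) ^ Nat.dist m n)
      ≤ c * w ^ (3 * max m n) := by
        gcongr c * ?_
        rw [hdist]
        exact le_trans (by gcongr) (pow_mul_pow_sub_le_pow (hρ.trans hρB) hw0 hw1 hBL hgap)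
    _ ≤ c * w ^ (n + m + n) := by
        gcongr c * ?_
        exact pow_le_pow_of_le_one hw0 hw1 (by omega)
    _ = (c * w ^ n) * (w ^ m * w ^ n) := by ring
    _ ≤ w ^ m * w ^ n := mul_le_of_le_one_left (by positivity) hcn

variable {𝕜 X : Type*} [NormedField 𝕜] [NormedAddCommGroup X] [NormedSpace 𝕜 X]

theorem norm_smul_pow_apply (l : 𝕜) (T : X →L[𝕜] X) (n : ℕ) (x : X) :
    ‖((l • T) ^ n) x‖ = ‖l‖ ^ n * ‖(T ^ n) x‖ := by
  rw [smul_pow, smul_apply, norm_smul, norm_pow]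

variable {T : X →L[𝕜] X} {X₀ : Set X} {S : X₀ → X₀}

theorem pow_apply_iterate (hTS : ∀ z : X₀, T (S z) = z) (n : ℕ) (z : X₀) :
    (T ^ n) (S^[n] z) = z := by
  induction n with
  | zero => rfl
  | succ n ih =>
    rw [pow_succ, mul_apply_eq_comp, Function.iterate_succ_apply', hTS, ih]

theorem norm_smul_pow_inv_smul_iterate_le (hTS : ∀ z : X₀, T (S z) = z) {y : X₀} {l l' : 𝕜}
    {C al be v : ℝ} (hal : 0 < al) (hv : 0 ≤ v) (hl : ‖l‖ ∈ Set.Icc al be)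
    (hl' : ‖l'‖ ∈ Set.Icc al be) (hS : ∀ n, ‖(S^[n] y : X)‖ ≤ C * (al * v) ^ n)
    (hT : ∀ n, ‖(T ^ n) y‖ ≤ C * (v / be) ^ n) (m n : ℕ) :
    ‖((l • T) ^ m) ((l' ^ n)⁻¹ • (S^[n] y : X))‖ ≤
      C * ((‖l‖ / ‖l'‖) ^ min m n * v ^ Nat.dist m n) := by
  have hl0 : 0 < ‖l‖ := hal.trans_le hl.1
  have hl'0 : 0 < ‖l'‖ := hal.trans_le hl'.1
  have hbe : 0 < be := hl0.trans_le hl.2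
  have hC : 0 ≤ C := by simpa using (norm_nonneg _).trans (hS 0)
  rw [map_smul, norm_smul, norm_smul_pow_apply, norm_inv, norm_pow]
  rcases le_total m n with hmn | hnm
  · obtain ⟨d, rfl⟩ := Nat.exists_eq_add_of_le hmn
    have hinv : (T ^ m) (S^[m + d] y) = (S^[d] y : X) := by
      rw [Function.iterate_add_apply, pow_apply_iterate hTS]
    rw [hinv, min_eq_left hmn, Nat.dist_eq_sub_of_le hmn, Nat.add_sub_cancel_left]
    calc (‖l'‖ ^ (m + d))⁻¹ * (‖l‖ ^ m * ‖(S^[d] y : X)‖)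
        ≤ (‖l'‖ ^ (m + d))⁻¹ * (‖l‖ ^ m * (C * (‖l'‖ * v) ^ d)) := by
          gcongr
          exact (hS d).trans (by gcongr; exact hl'.1)
      _ = C * ((‖l‖ / ‖l'‖) ^ m * v ^ d) := by
          rw [pow_add, mul_pow, div_pow]
          field_simp
  · obtain ⟨d, rfl⟩ := Nat.exists_eq_add_of_le hnm
    have hinv : (T ^ (n + d)) (S^[n] y) = (T ^ d) y := by
      rw [add_comm, pow_add, mul_apply_eq_comp, pow_apply_iterate hTS]
    rw [hinv, min_eq_right hnm, Nat.dist_eq_sub_of_le_right hnm, Nat.add_sub_cancel_left]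
    calc (‖l'‖ ^ n)⁻¹ * (‖l‖ ^ (n + d) * ‖(T ^ d) y‖)
        ≤ (‖l'‖ ^ n)⁻¹ * (‖l‖ ^ (n + d) * (C * (v / ‖l‖) ^ d)) := by
          gcongr
          exact (hT d).trans (by gcongr; exact hl.2)
      _ = C * ((‖l‖ / ‖l'‖) ^ n * v ^ d) := by
          rw [pow_add, div_pow, div_pow]
          field_simp

/-- The scalars `lam p` have norms in `[al, be]`, and up to the factor `C p` the orbits of `y p`
decay like `(al * w ^ 4) ^ n` under `S` and like `(w ^ 4 / be) ^ n` under `T`. The exponent `4`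
leaves room to absorb constants into powers of `w`. -/
structure HasTwoSidedDecay (T : X →L[𝕜] X) (S : X₀ → X₀) (lam : ℕ → 𝕜) (y : ℕ → X₀) (C : ℕ → ℝ)
    (al be w : ℝ) : Prop where
  w_pos : 0 < w
  w_lt_one : w < 1
  al_pos : 0 < al
  norm_mem_Icc : ∀ p, ‖lam p‖ ∈ Set.Icc al be
  one_le : ∀ p, 1 ≤ C p
  norm_iterate_le : ∀ p n, ‖(S^[n] (y p) : X)‖ ≤ C p * (al * w ^ 4) ^ n
  norm_pow_le : ∀ p n, ‖(T ^ n) (y p)‖ ≤ C p * (w ^ 4 / be) ^ n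

/-- The general term of the series `∑_{n ∈ E} λ^{-n} S^n y`, where `λ = lam p` and `y = y p` are
selected by the label `p = P n`. Its sum is the common frequently hypercyclic vector. -/
noncomputable def inverseOrbitTerm (S : X₀ → X₀) (lam : ℕ → 𝕜) (y : ℕ → X₀) (E : Set ℕ)
    (P : ℕ → ℕ) : ℕ → X :=
  E.indicator fun n => (lam (P n) ^ n)⁻¹ • (S^[n] (y (P n)) : X)

variable {lam : ℕ → 𝕜} {y : ℕ → X₀} {E : Set ℕ} {P M : ℕ → ℕ} {C : ℕ → ℝ} {al be w : ℝ} {L : ℕ}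

theorem smul_pow_inverseOrbitTerm_self (hTS : ∀ z : X₀, T (S z) = z) {m : ℕ}
    (hlam : lam (P m) ≠ 0) (hm : m ∈ E) :
    ((lam (P m) • T) ^ m) (inverseOrbitTerm S lam y E P m) = y (P m) := by
  rw [inverseOrbitTerm, Set.indicator_of_mem hm, map_smul, smul_pow, smul_apply,
    pow_apply_iterate hTS, inv_smul_smul₀ (pow_ne_zero m hlam)]

namespace HasTwoSidedDecay

theorem norm_pos (h : HasTwoSidedDecay T S lam y C al be w) (p : ℕ) : 0 < ‖lam p‖ :=
  h.al_pos.trans_le (h.norm_mem_Icc p).1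

theorem norm_smul_pow_le (h : HasTwoSidedDecay T S lam y C al be w)
    (hTS : ∀ z : X₀, T (S z) = z) (p q m n : ℕ) :
    ‖((lam p • T) ^ m) ((lam q ^ n)⁻¹ • (S^[n] (y q) : X))‖ ≤
      C q * ((‖lam p‖ / ‖lam q‖) ^ min m n * (w ^ 4) ^ Nat.dist m n) :=
  norm_smul_pow_inv_smul_iterate_le hTS h.al_pos (pow_nonneg h.w_pos.le 4) (h.norm_mem_Icc p)
    (h.norm_mem_Icc q) (h.norm_iterate_le q) (h.norm_pow_le q) m n

theorem norm_inverseOrbitTerm_le (h : HasTwoSidedDecay T S lam y C al be w)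
    (hTS : ∀ z : X₀, T (S z) = z) (hM : ∀ p, ∀ n ≥ M p, C p * w ^ n ≤ w ^ p)
    (hE : ∀ n ∈ E, M (P n) ≤ n) (n : ℕ) : ‖inverseOrbitTerm S lam y E P n‖ ≤ w ^ n := by
  have hw0 := h.w_pos.le
  by_cases hn : n ∈ E
  · rw [inverseOrbitTerm, Set.indicator_of_mem hn]
    calc ‖(lam (P n) ^ n)⁻¹ • (S^[n] (y (P n)) : X)‖
        ≤ C (P n) * (w ^ 4) ^ n := by
          simpa [Nat.dist] using h.norm_smul_pow_le hTS (P n) (P n) 0 n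
      _ = (C (P n) * w ^ n) * w ^ (3 * n) := by ring
      _ ≤ 1 * w ^ n := by
          gcongr ?_ * ?_
          · exact (hM _ n (hE n hn)).trans (pow_le_one₀ hw0 h.w_lt_one.le)
          · exact pow_le_pow_of_le_one hw0 h.w_lt_one.le (by omega)
      _ = w ^ n := one_mul _
  · rw [inverseOrbitTerm, Set.indicator_of_notMem hn, norm_zero]
    positivity

theorem norm_smul_pow_inverseOrbitTerm_le (h : HasTwoSidedDecay T S lam y C al be w)
    (hTS : ∀ z : X₀, T (S z) = z) (hM : ∀ p, ∀ n ≥ M p, C p * w ^ n ≤ w ^ p)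
    (hL : be / al * w ^ L ≤ 1) (hE : IsSeparated (L + 4) M E P) {m n : ℕ} (hm : m ∈ E)
    (hn : n ∈ E) (hmn : m ≠ n) :
    ‖((lam (P m) • T) ^ m) (inverseOrbitTerm S lam y E P n)‖ ≤
      w ^ P m * (w ^ n + w ^ Nat.dist m n) := by
  have hw0 := h.w_pos.le
  have hw1 := h.w_lt_one.le
  rw [inverseOrbitTerm, Set.indicator_of_mem hn, mul_add]
  refine (h.norm_smul_pow_le hTS (P m) (P n) m n).trans ?_
  rcases hE.gap m hm n hn hmn with ⟨hP, hd⟩ | hgap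
  · refine le_add_of_nonneg_of_le (by positivity) ?_
    rw [← hP, div_self (h.norm_pos _).ne', one_pow, one_mul, ← pow_mul]
    calc C (P m) * w ^ (4 * Nat.dist m n)
        = (C (P m) * w ^ Nat.dist m n) * w ^ (3 * Nat.dist m n) := by ring
      _ ≤ w ^ P m * w ^ Nat.dist m n := by
          gcongr ?_ * ?_
          · exact hM _ _ hd
          · exact pow_le_pow_of_le_one hw0 hw1 (by omega)
  · refine le_add_of_le_of_nonneg ?_ (by positivity)
    have hratio : ‖lam (P m)‖ / ‖lam (P n)‖ ≤ be / al :=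
      div_le_div₀ ((norm_nonneg _).trans (h.norm_mem_Icc 0).2) (h.norm_mem_Icc _).2 h.al_pos
        (h.norm_mem_Icc _).1
    have hwm : w ^ m ≤ w ^ P m :=
      (le_mul_of_one_le_left (pow_nonneg hw0 m) (h.one_le _)).trans
        (hM _ m (hE.le_of_mem m hm))
    have hwn : C (P n) * w ^ n ≤ 1 :=
      (hM _ n (hE.le_of_mem n hn)).trans (pow_le_one₀ hw0 hw1)
    refine (mul_pow_min_mul_pow_dist_le hw0 hw1 (by positivity) hratio hL
      (one_pos.le.trans (h.one_le _)) hwn hgap).trans ?_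
    gcongr

end HasTwoSidedDecay

theorem norm_map_tsum_sub_le {Y : Type*} [NormedAddCommGroup Y] [NormedSpace 𝕜 Y] (A : X →L[𝕜] Y)
    {f : ℕ → X} (hf : Summable f) {b : ℕ → ℝ} (hb : Summable b) (hb0 : ∀ n, 0 ≤ b n) {m : ℕ}
    (hfb : ∀ n, n ≠ m → ‖A (f n)‖ ≤ b n) : ‖A (∑' n, f n) - A (f m)‖ ≤ ∑' n, b n := by
  have hsum := (A.hasSum hf.hasSum).sub (hasSum_ite_eq m (A (f m)))
  refine hsum.norm_le_of_bounded hb.hasSum fun n => ?_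
  by_cases hn : n = m
  · simpa [hn] using hb0 m
  · simpa [hn] using hfb n hn

namespace HasTwoSidedDecay

theorem norm_smul_pow_tsum_sub_le (h : HasTwoSidedDecay T S lam y C al be w)
    (hTS : ∀ z : X₀, T (S z) = z) (hM : ∀ p, ∀ n ≥ M p, C p * w ^ n ≤ w ^ p)
    (hL : be / al * w ^ L ≤ 1) (hE : IsSeparated (L + 4) M E P)
    (hf : Summable (inverseOrbitTerm S lam y E P)) {m : ℕ} (hm : m ∈ E) :
    ‖((lam (P m) • T) ^ m) (∑' n, inverseOrbitTerm S lam y E P n) - y (P m)‖ ≤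
      w ^ P m * (3 / (1 - w)) := by
  have hw0 := h.w_pos.le
  obtain ⟨hdist, hdist_le⟩ := summable_pow_dist_and_tsum_le hw0 h.w_lt_one m
  have hgeom := summable_geometric_of_lt_one hw0 h.w_lt_one
  have hbound := norm_map_tsum_sub_le ((lam (P m) • T) ^ m) hf
    ((hgeom.add hdist).mul_left (w ^ P m)) (fun n => by positivity) fun n hn => by
      by_cases hnE : n ∈ E
      · exact h.norm_smul_pow_inverseOrbitTerm_le hTS hM hL hE hm hnE hn.symm
      · rw [inverseOrbitTerm, Set.indicator_of_notMem hnE, map_zero, norm_zero]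
        positivity
  rw [smul_pow_inverseOrbitTerm_self hTS (norm_pos_iff.1 (h.norm_pos _)) hm, tsum_mul_left,
    hgeom.tsum_add hdist, tsum_geometric_of_lt_one hw0 h.w_lt_one] at hbound
  refine hbound.trans (mul_le_mul_of_nonneg_left ?_ (by positivity))
  calc (1 - w)⁻¹ + ∑' n, w ^ Nat.dist m n ≤ (1 - w)⁻¹ + 2 / (1 - w) := by gcongr
    _ = 3 / (1 - w) := by ring

theorem exists_forall_lowerDensity_pos [CompleteSpace X]
    (h : HasTwoSidedDecay T S lam y C al be w) (hTS : ∀ z : X₀, T (S z) = z) :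
    ∃ x : X, ∀ p, 0 < lowerDensity
      {n | ‖((lam p • T) ^ n) x - y p‖ ≤ w ^ p * (3 / (1 - w))} := by
  have hsmall (c : ℝ) {ε : ℝ} (hε : 0 < ε) : ∃ M, ∀ n ≥ M, c * w ^ n ≤ ε := by
    have hlim : Tendsto (fun n => c * w ^ n) atTop (𝓝 0) := by
      simpa using (tendsto_pow_atTop_nhds_zero_of_lt_one h.w_pos.le h.w_lt_one).const_mul c
    exact eventually_atTop.1 (hlim.eventually_le_const hε)
  choose M hM using fun p => hsmall (C p) (pow_pos h.w_pos p)
  obtain ⟨L, hL⟩ := hsmall (be / al) one_pos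
  obtain ⟨E, P, hE, hdens⟩ := exists_isSeparated (show 2 ≤ L + 4 by omega) M
  have hf : Summable (inverseOrbitTerm S lam y E P) :=
    (summable_geometric_of_lt_one h.w_pos.le h.w_lt_one).of_norm_bounded
      (h.norm_inverseOrbitTerm_le hTS hM hE.le_of_mem)
  refine ⟨∑' n, inverseOrbitTerm S lam y E P n, fun p => lowerDensity_pos_mono ?_ (hdens p)⟩
  rintro m ⟨hm, rfl⟩
  exact h.norm_smul_pow_tsum_sub_le hTS hM (hL L le_rfl) hE hf hm

end HasTwoSidedDecay

end Construction

section Sufficiency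

theorem exists_seq_frequently_eq (α : Type*) [Countable α] [Nonempty α] :
    ∃ f : ℕ → α, ∀ a, ∃ᶠ p in atTop, f p = a := by
  obtain ⟨g, hg⟩ := exists_surjective_nat α
  refine ⟨fun p => g p.unpair.1, fun a => frequently_atTop.2 fun N => ?_⟩
  obtain ⟨k, rfl⟩ := hg a
  exact ⟨Nat.pair k N, Nat.right_le_pair k N, congrArg g (by rw [Nat.unpair_pair])⟩

theorem exists_norm_iterate_le_of_aT_lt {X : Type*} [NormedAddCommGroup X] {X₀ : Set X}
    {S : X₀ → X₀} {R : ℝ} (h : aT X₀ S < ENNReal.ofReal R) (z : X₀) :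
    ∃ C ≥ 0, ∀ n, ‖(S^[n] z : X)‖ ≤ C * R ^ n :=
  exists_forall_norm_le_mul_pow ((le_iSup _ z).trans_lt h)

variable {X : Type*} [NormedAddCommGroup X] [NormedSpace ℂ X] {T : X →L[ℂ] X} {X₀ : Set X}
  {S : X₀ → X₀}

theorem mem_FHC_of_dense {t : Set X} (ht : Dense t) {x : X}
    (h : ∀ z ∈ t, ∀ ε > 0, 0 < lowerDensity {n | ‖(T ^ n) x - z‖ < ε}) : x ∈ FHC T := by
  intro U hU hne
  obtain ⟨z, hzU, hzt⟩ := ht.inter_open_nonempty U hU hne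
  obtain ⟨ε, hε, hball⟩ := Metric.isOpen_iff.1 hU z hzU
  exact lowerDensity_pos_mono (fun n hn => hball (mem_ball_iff_norm.2 hn)) (h z hzt ε hε)

theorem exists_norm_pow_le_of_lt_bT {R : ℝ} (hR : 0 < R) (h : ENNReal.ofReal R < bT T X₀)
    (z : X₀) : ∃ C ≥ 0, ∀ n, ‖(T ^ n) z‖ ≤ C * (R⁻¹) ^ n := by
  refine exists_forall_norm_le_mul_pow ?_
  rw [ENNReal.ofReal_inv_of_pos hR]
  exact ENNReal.lt_inv_iff_lt_inv.1 (h.trans_le (iInf_le _ z))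

theorem exists_hasTwoSidedDecay {al be : ℝ} (hal : aT X₀ S < ENNReal.ofReal al)
    (hbe : ENNReal.ofReal be < bT T X₀) {lam : ℕ → ℂ} (hlam : ∀ p, ‖lam p‖ ∈ Set.Icc al be)
    (y : ℕ → X₀) : ∃ C w, HasTwoSidedDecay T S lam y C al be w := by
  have hal0 : 0 < al := ENNReal.ofReal_pos.1 (bot_le.trans_lt hal)
  have hbe0 : 0 < be := hal0.trans_le ((hlam 0).1.trans (hlam 0).2)
  have hnear_al : ∀ᶠ w : ℝ in 𝓝 1, aT X₀ S < ENNReal.ofReal (al * w ^ 4) := by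
    have hcont : Continuous fun w : ℝ => ENNReal.ofReal (al * w ^ 4) :=
      ENNReal.continuous_ofReal.comp (by fun_prop)
    exact hcont.continuousAt.eventually_const_lt (by simpa using hal)
  have hnear_be : ∀ᶠ w : ℝ in 𝓝 1, ENNReal.ofReal (be / w ^ 4) < bT T X₀ := by
    have hcont : ContinuousAt (fun w : ℝ => ENNReal.ofReal (be / w ^ 4)) 1 :=
      ENNReal.continuous_ofReal.continuousAt.comp (by fun_prop (disch := norm_num))
    exact hcont.eventually_lt_const (by simpa using hbe)
  have hnear_one : ∀ᶠ w : ℝ in 𝓝[<] 1, w ∈ Set.Ioo 0 1 := Ioo_mem_nhdsLT one_pos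
  obtain ⟨w, ⟨hw0, hw1⟩, hwal, hwbe⟩ :=
    (hnear_one.and (eventually_nhdsWithin_of_eventually_nhds (hnear_al.and hnear_be))).exists
  choose A hA0 hA using fun p => exists_norm_iterate_le_of_aT_lt hwal (y p)
  choose B hB0 hB using fun p => exists_norm_pow_le_of_lt_bT (by positivity) hwbe (y p)
  simp only [inv_div] at hB
  refine ⟨fun p => A p + B p + 1, w, hw0, hw1, hal0, hlam, fun p => ?_, fun p n => ?_,
    fun p n => ?_⟩
  · linarith [hA0 p, hB0 p]
  · exact (hA p n).trans (by gcongr; linarith [hB0 p])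
  · exact (hB p n).trans (by gcongr; linarith [hA0 p])

theorem exists_forall_mem_FHC [CompleteSpace X] [TopologicalSpace.SeparableSpace X]
    (hX₀ : Dense X₀) (hTS : ∀ z : X₀, T (S z) = z) {Λ : Set ℝ} (hΛ : Λ.Countable)
    {al be : ℝ} (hal : aT X₀ S < ENNReal.ofReal al) (hbe : ENNReal.ofReal be < bT T X₀)
    (hΛab : Λ ⊆ Set.Icc al be) : ∃ x : X, ∀ l ∈ Λ, x ∈ FHC ((l : ℂ) • T) := by
  rcases Λ.eq_empty_or_nonempty with rfl | hne
  · exact ⟨0, fun l hl => hl.elim⟩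
  obtain ⟨t, htX₀, htc, ht⟩ := hX₀.exists_countable_dense_subset
  have := hne.to_subtype
  have := ht.nonempty.to_subtype
  have := hΛ.to_subtype
  have := htc.to_subtype
  obtain ⟨f, hf⟩ := exists_seq_frequently_eq (Λ × t)
  have hal0 : 0 ≤ al := (ENNReal.ofReal_pos.1 (bot_le.trans_lt hal)).le
  have hlam (p : ℕ) : ‖(((f p).1 : ℝ) : ℂ)‖ ∈ Set.Icc al be := by
    have hmem := hΛab (f p).1.2
    rwa [Complex.norm_of_nonneg (hal0.trans hmem.1)]
  obtain ⟨C, w, hdecay⟩ := exists_hasTwoSidedDecay hal hbe hlam fun p =>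
    (⟨(f p).2, htX₀ (f p).2.2⟩ : X₀)
  obtain ⟨x, hx⟩ := hdecay.exists_forall_lowerDensity_pos hTS
  refine ⟨x, fun l hl => mem_FHC_of_dense ht fun z hz ε hε => ?_⟩
  have hlim : Tendsto (fun p => w ^ p * (3 / (1 - w))) atTop (𝓝 0) := by
    simpa using (tendsto_pow_atTop_nhds_zero_of_lt_one hdecay.w_pos.le hdecay.w_lt_one).mul_const
      (3 / (1 - w))
  obtain ⟨p, hp, hpε⟩ :=
    ((hf (⟨l, hl⟩, ⟨z, hz⟩)).and_eventually (hlim.eventually_lt_const hε)).exists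
  have hxp := hx p
  rw [hp] at hxp
  exact lowerDensity_pos_mono (fun n hn => hn.trans_lt hpε) hxp

end Sufficiency

section Necessity

variable {X : Type*} [NormedAddCommGroup X] [NormedSpace ℂ X] {T : X →L[ℂ] X} {x : X}

theorem lowerDensity_shellTimes_pos_of_mem_FHC [Nontrivial X] {l : ℝ} (hl : 0 ≤ l)
    (hx : x ∈ FHC ((l : ℂ) • T)) : 0 < lowerDensity (shellTimes (fun n => ‖(T ^ n) x‖) l) := by
  have hopen : IsOpen {z : X | ‖z‖ ∈ Set.Ioo (1 : ℝ) 2} := isOpen_Ioo.preimage continuous_norm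
  obtain ⟨z, hz⟩ := exists_norm_eq X (show (0 : ℝ) ≤ 3 / 2 by norm_num)
  have hne : {z : X | ‖z‖ ∈ Set.Ioo (1 : ℝ) 2}.Nonempty := ⟨z, by norm_num [hz]⟩
  simpa only [shellTimes, Set.mem_ofPred_eq, norm_smul_pow_apply, Complex.norm_of_nonneg hl]
    using hx _ hopen hne

theorem spectralRadius_ne_top {A : Type*} [NormedRing A] [NormedAlgebra ℂ A] [CompleteSpace A]
    (a : A) : spectralRadius ℂ a ≠ ⊤ := by
  refine ne_top_of_le_ne_top ?_ (spectrum.spectralRadius_le_pow_nnnorm_pow_one_div ℂ a 0)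
  finiteness

theorem hasGrowthRateLE_norm_pow_apply [CompleteSpace X] :
    HasGrowthRateLE (fun n => ‖(T ^ n) x‖) (spectralRadius ℂ T).toReal := by
  intro R hR
  obtain ⟨C, hC, hbound⟩ := exists_forall_norm_pow_le_mul_pow
    ((ENNReal.lt_ofReal_iff_toReal_lt (spectralRadius_ne_top T)).2 hR)
  refine ⟨C, hC, fun n d => ?_⟩
  calc ‖(T ^ (n + d)) x‖ = ‖(T ^ d) ((T ^ n) x)‖ := by
        rw [add_comm, pow_add, mul_apply_eq_comp]
    _ ≤ ‖T ^ d‖ * ‖(T ^ n) x‖ := (T ^ d).le_opNorm _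
    _ ≤ C * R ^ d * ‖(T ^ n) x‖ := by gcongr; exact hbound d

theorem inv_lt_ofReal_of_one_lt_mul_toReal {r : ℝ≥0∞} {z : ℝ} (hr : r ≠ ⊤)
    (h : 1 < z * r.toReal) : r⁻¹ < ENNReal.ofReal z := by
  have hr0 : 0 < r.toReal := lt_of_le_of_ne ENNReal.toReal_nonneg fun h0 => by
    rw [← h0, mul_zero] at h
    exact h.not_ge zero_le_one
  rw [← ENNReal.ofReal_toReal hr, ← ENNReal.ofReal_inv_of_pos hr0]
  have hlt : r.toReal⁻¹ < z := (inv_lt_iff_one_lt_mul₀ hr0).2 h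
  exact (ENNReal.ofReal_lt_ofReal_iff ((inv_pos.2 hr0).trans hlt)).2 hlt

theorem countable_and_isCompact_closure_of_forall_mem_FHC [CompleteSpace X] [Nontrivial X]
    {Λ : Set ℝ} (hpos : Λ ⊆ Set.Ioi 0) (hnt : Λ.Nontrivial)
    (hx : ∀ l ∈ Λ, x ∈ FHC ((l : ℂ) • T)) :
    Λ.Countable ∧ IsCompact (closure Λ) ∧
      closure Λ ⊆ {l : ℝ | (spectralRadius ℂ T)⁻¹ < ENNReal.ofReal l} := by
  have hr : 0 ≤ (spectralRadius ℂ T).toReal := ENNReal.toReal_nonneg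
  have hu : HasGrowthRateLE (fun n => ‖(T ^ n) x‖) (spectralRadius ℂ T).toReal :=
    hasGrowthRateLE_norm_pow_apply
  have hshell (l : ℝ) (hl : l ∈ Λ) : 0 < lowerDensity (shellTimes (fun n => ‖(T ^ n) x‖) l) :=
    lowerDensity_shellTimes_pos_of_mem_FHC (hpos hl).le (hx l hl)
  refine ⟨countable_of_lowerDensity_shellTimes_pos hpos hshell, ?_, fun z hz =>
    inv_lt_ofReal_of_one_lt_mul_toReal (spectralRadius_ne_top T)
      (one_lt_mul_of_mem_closure hu hr hpos hshell hnt hz)⟩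
  exact (Metric.isBounded_of_bddAbove_of_bddBelow
    (bddAbove_of_lowerDensity_shellTimes_pos hu hr hpos hshell)
    ⟨0, fun l hl => (hpos hl).le⟩).isCompact_closure

end Necessity

theorem nontrivial_of_aT_eq_inv_spectralRadius {X : Type*} [NormedAddCommGroup X]
    [NormedSpace ℂ X] {T : X →L[ℂ] X} {X₀ : Set X} {S : X₀ → X₀}
    (haT : aT X₀ S = (spectralRadius ℂ T)⁻¹) : Nontrivial X := by
  by_contra htriv
  have := not_nontrivial_iff_subsingleton.1 htriv
  have haT0 : aT X₀ S = 0 := by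
    refine ENNReal.iSup_eq_zero.2 fun z => ?_
    refine (limsup_congr (v := fun _ => (0 : ℝ≥0∞)) ?_).trans (limsup_const 0)
    filter_upwards [eventually_gt_atTop 0] with n hn
    rw [Subsingleton.elim (S^[n] z : X) 0, nnnorm_zero, ENNReal.coe_zero,
      ENNReal.zero_rpow_of_pos (by positivity)]
  rw [haT0, spectrum.SpectralRadius.of_subsingleton, ENNReal.inv_zero] at haT
  exact ENNReal.zero_ne_top haT

theorem stmt6_general {X : Type*} [NormedAddCommGroup X] [NormedSpace ℂ X]
    [CompleteSpace X] [TopologicalSpace.SeparableSpace X]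
    (T : X →L[ℂ] X) (X₀ : Set X) (hX₀ : Dense X₀) (S : X₀ → X₀)
    (hTS : ∀ x : X₀, T ((S x : X₀) : X) = (x : X))
    (haT : aT X₀ S = (spectralRadius ℂ T)⁻¹)
    (Λ : Set ℝ) (hbT : ∀ l ∈ closure Λ, ENNReal.ofReal l < bT T X₀)
    (hΛpos : Λ ⊆ Set.Ioi (0 : ℝ)) (hΛ2 : ∃ a ∈ Λ, ∃ b ∈ Λ, a ≠ b) :
    (∃ x : X, ∀ l ∈ Λ, x ∈ FHC ((l : ℂ) • T)) ↔
      (Λ.Countable ∧ IsCompact (closure Λ) ∧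
        closure Λ ⊆ {l : ℝ | (spectralRadius ℂ T)⁻¹ < ENNReal.ofReal l}) := by
  have := nontrivial_of_aT_eq_inv_spectralRadius haT
  constructor
  · rintro ⟨x, hx⟩
    exact countable_and_isCompact_closure_of_forall_mem_FHC hΛpos hΛ2 hx
  · rintro ⟨hcount, hcompact, hsub⟩
    have hne : (closure Λ).Nonempty := (Set.Nontrivial.nonempty hΛ2).closure
    obtain ⟨al, hal, hal_le⟩ := hcompact.exists_isLeast hne
    obtain ⟨be, hbe, hle_be⟩ := hcompact.exists_isGreatest hne
    exact exists_forall_mem_FHC hX₀ hTS hcount (haT.trans_lt (hsub hal)) (hbT be hbe)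
      fun l hl => ⟨hal_le (subset_closure hl), hle_be (subset_closure hl)⟩

/-- Corollary 2.14: if `a_T(X₀,S) = 1/r(T)` and `b_T(X₀,S) = +∞`, then the multiples
`λT`, `λ ∈ Λ` (where `Λ ⊆ (0,∞)` has at least two elements), share a common frequently
hypercyclic vector if and only if `Λ` is countable and relatively compact in
`(1/r(T), +∞)`. -/
theorem stmt6 {X : Type*} [NormedAddCommGroup X] [NormedSpace ℂ X]
    [CompleteSpace X] [TopologicalSpace.SeparableSpace X]
    (T : X →L[ℂ] X) (X₀ : Set X) (hX₀ : Dense X₀) (S : X₀ → X₀)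
    (hTS : ∀ x : X₀, T ((S x : X₀) : X) = (x : X))
    (haT : aT X₀ S = (spectralRadius ℂ T)⁻¹)
    (hbT : bT T X₀ = ⊤)
    (Λ : Set ℝ) (hΛpos : Λ ⊆ Set.Ioi (0 : ℝ))
    (hΛ2 : ∃ a ∈ Λ, ∃ b ∈ Λ, a ≠ b) :
    (∃ x : X, ∀ l ∈ Λ, x ∈ FHC ((l : ℂ) • T)) ↔
      (Λ.Countable ∧ IsCompact (closure Λ) ∧
        closure Λ ⊆ {l : ℝ | (spectralRadius ℂ T)⁻¹ < ENNReal.ofReal l}) :=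
  stmt6_general T X₀ hX₀ S hTS haT Λ (fun _ _ => hbT ▸ ENNReal.ofReal_lt_top) hΛpos hΛ2
end

section
/- Let 1 ≤ p < ∞, let B_w be a bounded weighted backward shift on ℓ^p(ℕ), and let Λ be a subset of (0,+∞) with at least two elements. If λ_w^{−1} ≥ inf(Λ), where λ_w := limsup_{n→∞} |w_1 ⋯ w_n|^{1/n}, then ⋂_{λ∈Λ} FHC(λB_w) = ∅. -/
/-!
If `B` is a weighted backward shift, then `w₁⋯w_j` times the `j`-th coordinate of `(μB)ⁿx` is `μⁿ`
times the `0`-th coordinate of `Bⁿ⁺ʲx`. Hence a bound on `(μB)ⁿx` for `n` in a set of positive lower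
density bounds the `0`-th coordinate of every `Bᵐx`, because `m = n + j` for some such `n` with
`m ≤ Kn`, where `K` is independent of `m`. Since `|w₁⋯w_j|` is essentially at most `λ_w ^ j`, the
bound obtained is so strong that the `0`-th coordinate of `(lB)ᵐx` tends to `0` as soon as `|l|` is
close enough to a number `a < |μ|` with `a λ_w ≤ 1`; then `x` is not even hypercyclic for `lB`.
-/

open Filter Topology
open scoped ENNReal NNReal

/-- `λ_w = limsup_n |w₁⋯w_n|^{1/n}`, computed in `ℝ≥0∞`. -/
noncomputable def lamw (w : ℕ → ℂ) : ℝ≥0∞ :=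
  Filter.limsup
    (fun n : ℕ => (∏ k ∈ Finset.Icc 1 n, (‖w k‖₊ : ℝ≥0∞)) ^ (1 / (n : ℝ)))
    Filter.atTop

section LowerDensity

variable {E : Set ℕ}

lemma eventually_exists_mem_lt_of_lt_lowerDensity {d : ℝ} (hd0 : 0 ≤ d) (hd : d < lowerDensity E) :
    ∀ᶠ m : ℕ in atTop, ∃ n ∈ E, n ≤ m ∧ d * (m + 1) < n + 1 := by
  classical
  have hbdd : IsBoundedUnder (· ≥ ·) atTop (fun m : ℕ =>
      (∑ k ∈ Finset.range (m + 1), Set.indicator E (fun _ => (1 : ℝ)) k) / ((m : ℝ) + 1)) :=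
    isBoundedUnder_of ⟨0, fun m => div_nonneg
      (Finset.sum_nonneg fun _ _ => Set.indicator_nonneg (fun _ _ => zero_le_one) _)
      (by positivity)⟩
  filter_upwards [eventually_lt_of_lt_liminf hd hbdd] with m hm
  set s := {k ∈ Finset.range (m + 1) | k ∈ E} with hs
  have hcard : d * (m + 1) < s.card := by
    rw [lt_div_iff₀ (by positivity)] at hm
    simpa only [Set.indicator_apply, Finset.sum_boole, hs] using hm
  have hs_nonempty : s.Nonempty := by
    rw [← Finset.card_pos, ← Nat.cast_pos (α := ℝ)]
    exact hcard.trans_le' (by positivity)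
  obtain ⟨n, hn, hmax⟩ := s.exists_max_image id hs_nonempty
  have hcard_le : s.card ≤ n + 1 := by
    simpa only [Finset.card_range, Nat.succ_eq_add_one, id] using
      Finset.card_le_card fun k hk => Finset.mem_range_succ_iff.2 (hmax k hk)
  obtain ⟨hnm, hnE⟩ := Finset.mem_filter.1 hn
  exact ⟨n, hnE, Finset.mem_range_succ_iff.1 hnm, hcard.trans_le (mod_cast hcard_le)⟩

lemma eventually_exists_mem_le_mul_of_lowerDensity_pos (hE : 0 < lowerDensity E) :
    ∃ K : ℕ, ∀ᶠ m : ℕ in atTop, ∃ n ∈ E, n ≤ m ∧ m ≤ K * n := by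
  obtain ⟨d, hd0, hd⟩ := exists_between hE
  obtain ⟨K, hK⟩ := exists_nat_gt (2 / d)
  refine ⟨K, ?_⟩
  filter_upwards [eventually_exists_mem_lt_of_lt_lowerDensity hd0.le hd, eventually_ge_atTop K]
    with m ⟨n, hnE, hnm, hlt⟩ hKm
  have hdK : 2 < K * d := (div_lt_iff₀ hd0).1 hK
  have hKm' : (K : ℝ) ≤ m := mod_cast hKm
  have hn : (1 : ℝ) < n := by nlinarith
  have hle : (m : ℝ) ≤ K * n := by
    refine le_of_mul_le_mul_right ?_ hd0
    calc (m : ℝ) * d ≤ 2 * n := by linarith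
      _ ≤ K * d * n := by gcongr
      _ = K * n * d := by ring
  exact ⟨n, hnE, hnm, mod_cast hle⟩

lemma exists_selection_of_lowerDensity_pos (hE : 0 < lowerDensity E) :
    ∃ (K : ℕ) (c : ℕ → ℕ), Tendsto c atTop atTop ∧
      ∀ᶠ m in atTop, c m ∈ E ∧ c m ≤ m ∧ m ≤ K * c m := by
  obtain ⟨K, hK⟩ := eventually_exists_mem_le_mul_of_lowerDensity_pos hE
  obtain ⟨c, hc⟩ := hK.choice
  refine ⟨K, c, tendsto_atTop.2 fun N => ?_, hc⟩
  filter_upwards [hc, eventually_gt_atTop (K * N)] with m ⟨_, _, hm⟩ hKN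
  exact (lt_of_mul_lt_mul_left (hKN.trans_le hm) K.zero_le).le

lemma frequently_mem_of_lowerDensity_pos (hE : 0 < lowerDensity E) : ∃ᶠ n in atTop, n ∈ E := by
  obtain ⟨_, _, hc, hcE⟩ := exists_selection_of_lowerDensity_pos hE
  exact hc.frequently (hcE.mono fun _ h => h.1).frequently

end LowerDensity

section WeightProducts

variable {w : ℕ → ℂ}

lemma lamw_le_of_nnnorm_le {A : ℝ≥0} (hA : ∀ n, ‖w n‖₊ ≤ A) : lamw w ≤ A := by
  refine limsup_le_of_le (by isBoundedDefault) ?_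
  filter_upwards [eventually_gt_atTop 0] with n hn
  rw [one_div, ENNReal.rpow_inv_le_iff (mod_cast hn), ENNReal.rpow_natCast]
  calc ∏ k ∈ Finset.Icc 1 n, (‖w k‖₊ : ℝ≥0∞) ≤ ∏ _k ∈ Finset.Icc 1 n, (A : ℝ≥0∞) :=
        Finset.prod_le_prod' fun k _ => mod_cast hA k
    _ = (A : ℝ≥0∞) ^ n := by rw [Finset.prod_const, Nat.card_Icc, Nat.add_sub_cancel]

lemma eventually_prod_norm_le_pow {ρ : ℝ} (hρ : lamw w < ENNReal.ofReal ρ) :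
    ∀ᶠ j in atTop, ∏ k ∈ Finset.Icc 1 j, ‖w k‖ ≤ ρ ^ j := by
  have hρ0 : 0 ≤ ρ := (ENNReal.ofReal_pos.1 (pos_of_gt hρ)).le
  filter_upwards [eventually_lt_of_limsup_lt hρ, eventually_gt_atTop 0] with j hj hj0
  have hle := hj.le
  rw [one_div, ENNReal.rpow_inv_le_iff (mod_cast hj0), ENNReal.rpow_natCast,
    ← ENNReal.ofReal_pow hρ0] at hle
  simpa only [ENNReal.toReal_prod, ENNReal.coe_toReal, coe_nnnorm] using
    ENNReal.toReal_le_of_le_ofReal (pow_nonneg hρ0 j) hle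

lemma exists_forall_prod_norm_le {ρ : ℝ} (hρ : lamw w < ENNReal.ofReal ρ) :
    ∃ C, ∀ j, ∏ k ∈ Finset.Icc 1 j, ‖w k‖ ≤ C * ρ ^ j := by
  have hρ0 : 0 < ρ := ENNReal.ofReal_pos.1 (pos_of_gt hρ)
  have hO : (fun j => ∏ k ∈ Finset.Icc 1 j, ‖w k‖) =O[atTop] fun j => ρ ^ j := by
    refine Asymptotics.IsBigO.of_bound' ?_
    filter_upwards [eventually_prod_norm_le_pow hρ] with j hj
    rwa [Real.norm_of_nonneg (by positivity), Real.norm_of_nonneg (by positivity)]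
  obtain ⟨C, _, hC⟩ := Asymptotics.bound_of_isBigO_nat_atTop hO
  refine ⟨C, fun j => (Real.le_norm_self _).trans ?_⟩
  simpa only [Real.norm_of_nonneg (pow_nonneg hρ0.le j)] using hC (pow_ne_zero j hρ0.ne')

end WeightProducts

section Decay

lemma pow_add_mul_pow_le {r ρ : ℝ} (hr : 0 ≤ r) (hρ : 0 ≤ ρ) {K n j : ℕ} (hj : j ≤ K * n) :
    r ^ (n + j) * ρ ^ j ≤ (max 1 (r * ρ) ^ K * r) ^ n := by
  calc r ^ (n + j) * ρ ^ j = (r * ρ) ^ j * r ^ n := by ring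
    _ ≤ max 1 (r * ρ) ^ j * r ^ n := by gcongr; exact le_max_right _ _
    _ ≤ max 1 (r * ρ) ^ (K * n) * r ^ n := by gcongr; exact le_max_left _ _
    _ = (max 1 (r * ρ) ^ K * r) ^ n := by rw [mul_pow, pow_mul]

lemma tendsto_pow_mul_zero_of_selection {v : ℕ → ℝ} (hv : ∀ m, 0 ≤ v m) {r ρ μ C : ℝ} (hr : 0 ≤ r)
    (hρ : 0 ≤ ρ) {K : ℕ} (hμ : max 1 (r * ρ) ^ K * r < μ) {c : ℕ → ℕ} (hc : Tendsto c atTop atTop)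
    (hcm : ∀ᶠ m in atTop, c m ≤ m ∧ m ≤ K * c m)
    (hbound : ∀ᶠ m in atTop, v m * μ ^ c m ≤ C * ρ ^ (m - c m)) :
    Tendsto (fun m => r ^ m * v m) atTop (𝓝 0) := by
  have hr' : 0 ≤ max 1 (r * ρ) ^ K * r := by positivity
  have hμ0 : 0 < μ := hr'.trans_lt hμ
  set q := max 1 (r * ρ) ^ K * r / μ with hq
  have hlim : Tendsto (fun m => |C| * q ^ c m) atTop (𝓝 0) := by
    simpa only [mul_zero, Function.comp_def] using
      ((tendsto_pow_atTop_nhds_zero_of_lt_one (div_nonneg hr' hμ0.le)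
        ((div_lt_one hμ0).2 hμ)).comp hc).const_mul |C|
  refine squeeze_zero' (.of_forall fun m => mul_nonneg (pow_nonneg hr m) (hv m)) ?_ hlim
  filter_upwards [hcm, hbound] with m ⟨hcle, hleK⟩ hm
  obtain ⟨j, hj⟩ := Nat.exists_eq_add_of_le hcle
  rw [show m - c m = j by omega] at hm
  rw [hq, div_pow, ← mul_div_assoc, le_div_iff₀ (by positivity)]
  calc r ^ m * v m * μ ^ c m = r ^ m * (v m * μ ^ c m) := mul_assoc _ _ _
    _ ≤ r ^ m * (|C| * ρ ^ j) := by
      refine mul_le_mul_of_nonneg_left (hm.trans ?_) (pow_nonneg hr m)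
      gcongr
      exact le_abs_self C
    _ = |C| * (r ^ (c m + j) * ρ ^ j) := by rw [← hj]; ring
    _ ≤ |C| * (max 1 (r * ρ) ^ K * r) ^ c m := by
      gcongr
      exact pow_add_mul_pow_le hr hρ (by omega)

lemma exists_gt_exists_gt_max_pow_mul_lt {a L μ : ℝ} (haL : a * L ≤ 1) (haμ : a < μ) (K : ℕ) :
    ∃ b > a, ∃ ρ > L, max 1 (b * ρ) ^ K * b < μ := by
  have hcont : Continuous fun t : ℝ => max 1 ((a + t) * (L + t)) ^ K * (a + t) := by fun_prop
  have hev : ∀ᶠ t in 𝓝 (0 : ℝ), max 1 ((a + t) * (L + t)) ^ K * (a + t) < μ :=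
    hcont.continuousAt.eventually_lt_const (by simpa [max_eq_left haL] using haμ)
  obtain ⟨t, ht, ht0⟩ :=
    ((hev.filter_mono nhdsWithin_le_nhds).and (self_mem_nhdsWithin (s := Set.Ioi 0))).exists
  exact ⟨a + t, lt_add_of_pos_right a ht0, L + t, lt_add_of_pos_right L ht0, ht⟩

end Decay

lemma coord_zero_iterate {X R : Type*} [CommMonoid R] {φ : ℕ → X → R} {w : ℕ → R} {B : X → X}
    (hB : ∀ x n, φ n (B x) = w (n + 1) * φ (n + 1) x) (j : ℕ) (x : X) :
    φ 0 (B^[j] x) = (∏ k ∈ Finset.Icc 1 j, w k) * φ j x := by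
  induction j generalizing x with
  | zero => simp
  | succ j ih =>
    rw [Function.iterate_succ_apply, ih, hB, Finset.prod_Icc_succ_top (by omega), mul_assoc]

section Operator

variable {X : Type*} [NormedAddCommGroup X] [NormedSpace ℂ X]

lemma notMem_FHC_of_tendsto_zero {T : X →L[ℂ] X} {f : X →L[ℂ] ℂ} (hf : f ≠ 0) {x : X}
    (hx : Tendsto (fun n => f ((T ^ n) x)) atTop (𝓝 0)) : x ∉ FHC T := by
  intro hxT
  obtain ⟨y, hy⟩ := LinearMap.surjective (f := (f : X →ₗ[ℂ] ℂ)) (mod_cast hf) 2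
  have hU : IsOpen {z | 1 < ‖f z‖} := isOpen_lt continuous_const (by fun_prop)
  have hyU : y ∈ {z | 1 < ‖f z‖} := by
    have hfy : f y = 2 := hy
    simp [hfy]
  have hlarge := frequently_mem_of_lowerDensity_pos (hxT _ hU ⟨y, hyU⟩)
  have hsmall : ∀ᶠ n in atTop, ‖f ((T ^ n) x)‖ < 1 :=
    hx.norm.eventually_lt_const (by simp)
  obtain ⟨n, hn, hn'⟩ := (hlarge.and_eventually hsmall).exists
  exact lt_asymm hn hn'

variable {φ : ℕ → X →L[ℂ] ℂ} {M : ℝ} {w : ℕ → ℂ} {B : X →L[ℂ] X}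

lemma norm_coord_zero_pow_mul_le (hφ : ∀ n, ‖φ n‖ ≤ M)
    (hB : ∀ x n, φ n (B x) = w (n + 1) * φ (n + 1) x) (μ : ℂ) (n j : ℕ) (x : X) :
    ‖φ 0 ((B ^ (n + j)) x)‖ * ‖μ‖ ^ n ≤
      (∏ k ∈ Finset.Icc 1 j, ‖w k‖) * (M * ‖((μ • B) ^ n) x‖) := by
  have hcoord : φ 0 ((B ^ (n + j)) x) * μ ^ n =
      (∏ k ∈ Finset.Icc 1 j, w k) * φ j (((μ • B) ^ n) x) := by
    rw [← coord_zero_iterate (φ := fun i => φ i) hB, ← FunLike.coe_pow_eq_iterate, smul_pow,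
      smul_apply, map_smul, map_smul, smul_eq_mul, mul_comm, add_comm n j,
      pow_add, mul_apply_eq_comp]
  calc ‖φ 0 ((B ^ (n + j)) x)‖ * ‖μ‖ ^ n
      = (∏ k ∈ Finset.Icc 1 j, ‖w k‖) * ‖φ j (((μ • B) ^ n) x)‖ := by
        rw [← norm_pow, ← norm_mul, hcoord, norm_mul, norm_prod]
    _ ≤ (∏ k ∈ Finset.Icc 1 j, ‖w k‖) * (M * ‖((μ • B) ^ n) x‖) := by
        gcongr
        exact (φ j).le_of_opNorm_le (hφ j) _

theorem exists_gt_forall_tendsto_coord_zero_of_mem_FHC (hφ : ∀ n, ‖φ n‖ ≤ M) (hw : lamw w ≠ ⊤)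
    (hB : ∀ x n, φ n (B x) = w (n + 1) * φ (n + 1) x) {a : ℝ} {μ : ℂ} (haμ : a < ‖μ‖)
    (ha : a * (lamw w).toReal ≤ 1) {x : X} (hx : x ∈ FHC (μ • B)) :
    ∃ b > a, ∀ l : ℂ, ‖l‖ < b → Tendsto (fun m => φ 0 (((l • B) ^ m) x)) atTop (𝓝 0) := by
  obtain ⟨K, c, hc, hcm⟩ := exists_selection_of_lowerDensity_pos
    (hx (Metric.ball 0 1) Metric.isOpen_ball (Metric.nonempty_ball.2 one_pos))
  obtain ⟨b, hab, ρ, hLρ, hbρ⟩ := exists_gt_exists_gt_max_pow_mul_lt ha haμ K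
  have hρ0 : 0 ≤ ρ := ENNReal.toReal_nonneg.trans hLρ.le
  have hM : 0 ≤ M := (norm_nonneg _).trans (hφ 0)
  obtain ⟨C, hC⟩ := exists_forall_prod_norm_le ((ENNReal.lt_ofReal_iff_toReal_lt hw).2 hLρ)
  have hbound : ∀ᶠ m in atTop, ‖φ 0 ((B ^ m) x)‖ * ‖μ‖ ^ c m ≤ C * M * ρ ^ (m - c m) := by
    filter_upwards [hcm] with m ⟨hmem, hle, _⟩
    calc ‖φ 0 ((B ^ m) x)‖ * ‖μ‖ ^ c m
        ≤ (∏ k ∈ Finset.Icc 1 (m - c m), ‖w k‖) * (M * ‖((μ • B) ^ c m) x‖) := by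
          simpa only [Nat.add_sub_cancel' hle] using
            norm_coord_zero_pow_mul_le hφ hB μ (c m) (m - c m) x
      _ ≤ (C * ρ ^ (m - c m)) * (M * 1) := by
          gcongr
          · exact (Finset.prod_nonneg fun _ _ => norm_nonneg _).trans (hC _)
          · exact hC _
          · exact (mem_ball_zero_iff.1 hmem).le
      _ = C * M * ρ ^ (m - c m) := by ring
  refine ⟨b, hab, fun l hl => tendsto_zero_iff_norm_tendsto_zero.2 ?_⟩
  have hlρ : max 1 (‖l‖ * ρ) ^ K * ‖l‖ < ‖μ‖ := hbρ.trans_le' (by gcongr)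
  simpa only [smul_pow, smul_apply, map_smul, norm_smul, norm_pow] using
    tendsto_pow_mul_zero_of_selection (fun m => norm_nonneg (φ 0 ((B ^ m) x))) (norm_nonneg l)
      hρ0 hlρ hc (hcm.mono fun _ h => h.2) hbound

-- The `φ n` are the coordinate functionals of a normed sequence space such as `ℓ^p` or `c₀`.
theorem stmt11_general (hφ : ∀ n, ‖φ n‖ ≤ M) (hφ0 : φ 0 ≠ 0) (hw : lamw w ≠ ⊤)
    (hB : ∀ x n, φ n (B x) = w (n + 1) * φ (n + 1) x) {Λ : Set ℝ} (hΛpos : Λ ⊆ Set.Ioi 0)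
    (hΛ : Λ.Nontrivial) (h : ENNReal.ofReal (sInf Λ) ≤ (lamw w)⁻¹) :
    ⋂ l ∈ Λ, FHC ((l : ℂ) • B) = ∅ := by
  refine Set.eq_empty_iff_forall_notMem.2 fun x hx => ?_
  rw [Set.mem_iInter₂] at hx
  obtain ⟨ν, hν, μ, hμ, hνμ⟩ := hΛ.exists_lt
  have hinf_lt : sInf Λ < μ := csInf_lt_of_lt ⟨0, fun l hl => (hΛpos hl).le⟩ hν hνμ
  have hinf_mul : sInf Λ * (lamw w).toReal ≤ 1 := by
    have hinf : 0 ≤ sInf Λ := Real.sInf_nonneg fun l hl => (hΛpos hl).le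
    simpa only [ENNReal.toReal_mul, ENNReal.toReal_ofReal hinf, ENNReal.toReal_one] using
      ENNReal.toReal_mono ENNReal.one_ne_top (ENNReal.le_inv_iff_mul_le.1 h)
  have hnorm {l : ℝ} (hl : l ∈ Λ) : ‖(l : ℂ)‖ = l := Complex.norm_of_nonneg (hΛpos hl).le
  obtain ⟨b, hb, hzero⟩ := exists_gt_forall_tendsto_coord_zero_of_mem_FHC hφ hw hB
    (hinf_lt.trans_eq (hnorm hμ).symm) hinf_mul (hx μ hμ)
  obtain ⟨l, hl, hlb⟩ := exists_lt_of_csInf_lt hΛ.nonempty hb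
  exact notMem_FHC_of_tendsto_zero hφ0 (hzero l ((hnorm hl).trans_lt hlb)) (hx l hl)

end Operator

section Lp

variable (p : ℝ≥0∞) [Fact (1 ≤ p)]

lemma norm_lp_evalCLM_le {ι : Type*} (i : ι) :
    ‖lp.evalCLM ℂ (fun _ : ι => ℂ) p i‖ ≤ 1 :=
  LinearMap.mkContinuous_norm_le _ zero_le_one _

lemma lp_evalCLM_ne_zero {ι : Type*} (i : ι) : lp.evalCLM ℂ (fun _ : ι => ℂ) p i ≠ 0 := by
  classical
  intro h
  have hone : lp.evalCLM ℂ (fun _ : ι => ℂ) p i (lp.single p i 1) = 1 :=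
    lp.single_apply_self (E := fun _ : ι => ℂ) p i 1
  exact one_ne_zero (hone.symm.trans (DFunLike.congr_fun h _))

end Lp

/-- Proposition 2.25: if `λ_w⁻¹ ≥ inf Λ` then the multiples `λB_w`, `λ ∈ Λ`,
share no frequently hypercyclic vector. The weighted backward shift is encoded
as a bounded operator `B` with `(B x) n = w (n+1) * x (n+1)`. -/
theorem stmt11 (p : ℝ≥0∞) [Fact (1 ≤ p)] (hp : p ≠ ⊤)
    (w : ℕ → ℂ) (hw0 : ∀ n : ℕ, 1 ≤ n → w n ≠ 0)
    (hwbdd : ∃ A : ℝ, ∀ n : ℕ, ‖w n‖ ≤ A)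
    (B : lp (fun _ : ℕ => ℂ) p →L[ℂ] lp (fun _ : ℕ => ℂ) p)
    (hB : ∀ x : lp (fun _ : ℕ => ℂ) p, ∀ n : ℕ, (B x) n = w (n + 1) * x (n + 1))
    (Λ : Set ℝ) (hΛpos : Λ ⊆ Set.Ioi (0 : ℝ))
    (hΛ2 : ∃ a ∈ Λ, ∃ b ∈ Λ, a ≠ b)
    (h : ENNReal.ofReal (sInf Λ) ≤ (lamw w)⁻¹) :
    ⋂ l ∈ Λ, FHC ((l : ℂ) • B) = ∅ := by
  obtain ⟨A, hA⟩ := hwbdd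
  have hlamw : lamw w ≠ ⊤ := ne_top_of_le_ne_top ENNReal.coe_ne_top
    (lamw_le_of_nnnorm_le fun n => NNReal.coe_le_coe.1 ((hA n).trans (Real.le_coe_toNNReal A)))
  exact stmt11_general (norm_lp_evalCLM_le p) (lp_evalCLM_ne_zero p 0) hlamw hB hΛpos hΛ2 h
end
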